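/- arXiv:2310.00494 — 2 statements merged into one kernel-verified Lean document; each statement's English description precedes it below -/
import Mathlib

section
/- Let A be an S^2-upper triangular d×d(2d-1) matrix over k and let Γ = (Γ_1,...,Γ_d) be a homogeneous cycle-free edge d-partition of the complete graph K_{2d}. Then either Γ = Γ^E or M_Γ(A) = 0. -/
open SimpleGraph

/-- Vertices of `K_{2d}` are `Fin (2*d)`, with `v : Fin (2*d)` representing the
1-based vertex `v + 1`.  For `i < j`, `indF i j` is the 0-based version of the index
`ind(i+1, j+1)`, where (1-based) `ind(x,y) = ⌈x/2⌉` if `x + y` is even and `⌈y/2⌉` if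
`x + y` is odd. -/
def indF {d : ℕ} (i j : Fin (2*d)) : Fin d :=
  if ((i : ℕ) + (j : ℕ)) % 2 = 0 then ⟨(i : ℕ) / 2, by have := i.isLt; omega⟩
  else ⟨(j : ℕ) / 2, by have := j.isLt; omega⟩

/-- Column indices of a `d × d(2d-1)` matrix: pairs `(i,j)` with `i < j` in `Fin (2*d)`. -/
abbrev EdgePair (d : ℕ) := {p : Fin (2*d) × Fin (2*d) // p.1 < p.2}

def ind {d : ℕ} (e : EdgePair d) : Fin d := indF e.val.1 e.val.2

/-- An edge `d`-partition of `K_{2d}`: spanning subgraphs with pairwise disjoint edge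
sets whose union is the edge set of the complete graph. -/
def IsEdgePartition {d : ℕ} (Γ : Fin d → SimpleGraph (Fin (2*d))) : Prop :=
  (∀ a b : Fin d, a ≠ b → Disjoint (Γ a).edgeSet (Γ b).edgeSet) ∧
  (⋃ a : Fin d, (Γ a).edgeSet) = (⊤ : SimpleGraph (Fin (2*d))).edgeSet

/-- A homogeneous cycle-free edge `d`-partition of `K_{2d}`. -/
def IsHCFPartition {d : ℕ} (Γ : Fin d → SimpleGraph (Fin (2*d))) : Prop :=
  IsEdgePartition Γ ∧ (∀ a b : Fin d, (Γ a).edgeSet.ncard = (Γ b).edgeSet.ncard) ∧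
  (∀ a : Fin d, (Γ a).IsAcyclic)

/-- The edge `d`-partition `Γ^E` associated with `E^{(2)}_d`:
`E(Γ^E_a) = {(i,j) : i < j, ind(i,j) = a}`. -/
def GammaE (d : ℕ) (a : Fin d) : SimpleGraph (Fin (2*d)) :=
  SimpleGraph.fromEdgeSet {e | ∃ i j : Fin (2*d), i < j ∧ indF i j = a ∧ e = s(i,j)}

-- The monomial `M_Γ(A) = ∏_{a=1}^d ∏_{(i,j) ∈ E(Γ_a)} A^a_{i,j}`.
open scoped Classical in
noncomputable def MGamma {d : ℕ} {k : Type*} [Field k]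
    (Γ : Fin d → SimpleGraph (Fin (2*d))) (A : Fin d → EdgePair d → k) : k :=
  ∏ a : Fin d, ∏ e : EdgePair d, if (Γ a).Adj e.val.1 e.val.2 then A a e else 1

/-- `A` is `S²`-upper triangular: entries strictly below the `S²`-diagonal vanish. -/
def S2UpperTriangular {d : ℕ} {k : Type*} [Field k] (A : Fin d → EdgePair d → k) : Prop :=
  ∀ (r : Fin d) (e : EdgePair d), ind e < r → A r e = 0

/-- `A` is `S²`-lower triangular: entries strictly above the `S²`-diagonal vanish. -/
def S2LowerTriangular {d : ℕ} {k : Type*} [Field k] (A : Fin d → EdgePair d → k) : Prop :=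
  ∀ (r : Fin d) (e : EdgePair d), r < ind e → A r e = 0

/-- The matrix form `I^{S²}_d` of `E^{(2)}_d`. -/
def IS2 (d : ℕ) (k : Type*) [Field k] : Fin d → EdgePair d → k :=
  fun r e => if r = ind e then 1 else 0

/-!
If `M_Γ(A) ≠ 0`, then every edge of `Γ_a` has index at least `a`. So the colouring of the edges of
`K_{2d}` by `Γ` lies pointwise below the colouring `ind` that defines `Γ^E`. All colour classes of
`Γ` have the same size, and so do those of `Γ^E`, each `Γ^E_a` being a double star spanning all `2d`
vertices. Two colourings with equal class sizes, one below the other, coincide.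
-/

section Fibers

variable {ι α : Type*} [Finite ι] {c f : ι → α}

theorem eq_of_le_of_ncard_fiber_eq [PartialOrder α] (hle : c ≤ f)
    (hcard : ∀ a, (c ⁻¹' {a}).ncard = (f ⁻¹' {a}).ncard) : c = f := by
  let σ : ι ≃ ι := Equiv.ofFiberEquiv fun a => (Finite.card_eq.1 (hcard a)).some
  have hσ (i : ι) : f (σ i) = c i := Equiv.ofFiberEquiv_map _ i
  have hupper (a : α) : {i | a ≤ c i} = {i | a ≤ f i} := by
    refine Set.eq_of_subset_of_ncard_le (fun i hi => le_trans hi (hle i)) ?_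
    exact (Set.ncard_congr' (σ.subtypeEquiv fun i => by simp only [Set.mem_ofPred_eq, hσ])).ge
  exact funext fun i => (hle i).antisymm ((hupper (f i)).ge (le_refl (f i)))

theorem card_mul_ncard_fiber_of_const [Finite α]
    (hc : ∀ a b, (c ⁻¹' {a}).ncard = (c ⁻¹' {b}).ncard) (a : α) :
    Nat.card α * (c ⁻¹' {a}).ncard = Nat.card ι := by
  have := Fintype.ofFinite α
  rw [← Nat.card_congr (Equiv.sigmaFiberEquiv c), Nat.card_sigma, Nat.card_eq_fintype_card,
    ← smul_eq_mul, ← Finset.card_univ, ← Finset.sum_const]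
  exact Finset.sum_congr rfl fun b _ => hc a b

theorem eq_of_le_of_ncard_fiber_const [Finite α] [PartialOrder α] (hle : c ≤ f)
    (hc : ∀ a b, (c ⁻¹' {a}).ncard = (c ⁻¹' {b}).ncard)
    (hf : ∀ a b, (f ⁻¹' {a}).ncard = (f ⁻¹' {b}).ncard) : c = f := by
  refine eq_of_le_of_ncard_fiber_eq hle fun a => ?_
  have hpos : 0 < Nat.card α := Nat.card_pos_iff.2 ⟨⟨a⟩, inferInstance⟩
  exact Nat.eq_of_mul_eq_mul_left hpos
    ((card_mul_ncard_fiber_of_const hc a).trans (card_mul_ncard_fiber_of_const hf a).symm)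

end Fibers

theorem sym2Mk_injective_of_lt {V : Type*} [Preorder V] :
    Function.Injective fun e : {p : V × V // p.1 < p.2} => s(e.1.1, e.1.2) := by
  rintro ⟨⟨i, j⟩, hij⟩ ⟨⟨i', j'⟩, hij'⟩ h
  rcases Sym2.eq_iff.1 h with ⟨rfl, rfl⟩ | ⟨rfl, rfl⟩
  · rfl
  · exact absurd hij hij'.not_gt

section LinearOrder

variable {V : Type*} [LinearOrder V]

theorem ncard_edgeSet_eq_ncard_lt_pairs (G : SimpleGraph V) :
    G.edgeSet.ncard = {e : {p : V × V // p.1 < p.2} | G.Adj e.1.1 e.1.2}.ncard := by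
  rw [← Set.ncard_image_of_injective _ sym2Mk_injective_of_lt]
  congr 1
  ext x
  induction x with | _ i j
  refine ⟨fun h => ?_, ?_⟩
  · rcases h.ne.lt_or_gt with hij | hji
    · exact ⟨⟨(i, j), hij⟩, h, rfl⟩
    · exact ⟨⟨(j, i), hji⟩, h.symm, Sym2.eq_swap⟩
  · rintro ⟨e, he, hx⟩
    exact hx ▸ (G.mem_edgeSet.2 he)

theorem simpleGraph_ext_of_lt {G H : SimpleGraph V}
    (h : ∀ i j, i < j → (G.Adj i j ↔ H.Adj i j)) : G = H := by
  ext i j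
  rcases lt_trichotomy i j with hij | rfl | hji
  · exact h i j hij
  · simp only [SimpleGraph.irrefl]
  · rw [G.adj_comm, H.adj_comm, h j i hji]

end LinearOrder

section EdgePartition

variable {d : ℕ}

theorem indF_eq_iff {i j : Fin (2 * d)} {a : Fin d} :
    indF i j = a ↔ ((i : ℕ) + j) % 2 = 0 ∧ (i : ℕ) / 2 = a ∨
      ((i : ℕ) + j) % 2 = 1 ∧ (j : ℕ) / 2 = a := by
  unfold indF
  split_ifs <;> simp only [Fin.ext_iff] <;> omega

namespace GammaE

theorem adj_iff_of_lt {a : Fin d} {i j : Fin (2 * d)} (hij : i < j) :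
    (GammaE d a).Adj i j ↔ indF i j = a := by
  rw [GammaE, SimpleGraph.fromEdgeSet_adj]
  refine ⟨?_, fun h => ⟨⟨i, j, hij, h, rfl⟩, hij.ne⟩⟩
  rintro ⟨⟨i', j', hij', h, he⟩, -⟩
  obtain ⟨rfl, rfl⟩ : i = i' ∧ j = j' := by
    simpa using @sym2Mk_injective_of_lt _ _ ⟨(i, j), hij⟩ ⟨(i', j'), hij'⟩ he
  exact h

/-- `Γ^E_a` is a double star with the (0-based) centres `2a` and `2a + 1`, and `hub a v` is the
centre to which the vertex `v` is joined: the centre of the same parity as `v` if `v` lies above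
both centres, of the opposite parity if it lies below; each centre has the other one as its hub. -/
def hub (a : Fin d) (v : Fin (2 * d)) : Fin (2 * d) :=
  if (v : ℕ) ≤ 2 * a + 1 then ⟨2 * a + 1 - v % 2, by omega⟩ else ⟨2 * a + v % 2, by omega⟩

theorem val_hub (a : Fin d) (v : Fin (2 * d)) :
    (hub a v : ℕ) = if (v : ℕ) ≤ 2 * a + 1 then 2 * (a : ℕ) + 1 - v % 2 else 2 * a + v % 2 :=
  apply_ite Fin.val ..

theorem hub_ne (a : Fin d) (v : Fin (2 * d)) : hub a v ≠ v := by
  rw [ne_eq, Fin.ext_iff, val_hub]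
  split_ifs <;> omega

theorem adj_iff_hub {a : Fin d} {v w : Fin (2 * d)} :
    (GammaE d a).Adj v w ↔ hub a v = w ∨ hub a w = v := by
  wlog hvw : v < w generalizing v w
  · rcases (not_lt.1 hvw).eq_or_lt with rfl | hwv
    · simp only [SimpleGraph.irrefl, hub_ne, or_self]
    · rw [SimpleGraph.adj_comm, this hwv, or_comm]
  rw [adj_iff_of_lt hvw, indF_eq_iff, Fin.ext_iff, Fin.ext_iff, val_hub, val_hub]
  rw [Fin.lt_def] at hvw
  split_ifs <;> omega

theorem edgeSet_eq_range_hub (a : Fin d) :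
    (GammaE d a).edgeSet = Set.range fun v => s(v, hub a v) := by
  ext x
  induction x with | _ v w
  simp only [SimpleGraph.mem_edgeSet, adj_iff_hub, Set.mem_range, Sym2.eq_iff]
  grind

theorem injOn_sym2Mk_hub (a : Fin d) :
    Set.InjOn (fun v => s(v, hub a v)) {v : Fin (2 * d) | (v : ℕ) ≠ 2 * a} := by
  intro v (hv : (v : ℕ) ≠ 2 * a) w (hw : (w : ℕ) ≠ 2 * a) h
  rcases Sym2.eq_iff.1 h with ⟨hvw, -⟩ | ⟨hv', hw'⟩
  · exact hvw
  · rw [Fin.ext_iff, val_hub] at hv' hw'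
    rw [Fin.ext_iff]
    split_ifs at hv' hw' <;> omega

theorem range_sym2Mk_hub (a : Fin d) :
    Set.range (fun v => s(v, hub a v)) =
      (fun v => s(v, hub a v)) '' {v : Fin (2 * d) | (v : ℕ) ≠ 2 * a} := by
  refine (Set.range_subset_iff.2 fun v => ?_).antisymm (Set.image_subset_range _ _)
  by_cases hv : (v : ℕ) = 2 * a
  · have hhub : hub a (hub a v) = v := by
      simp only [Fin.ext_iff, val_hub]
      split_ifs <;> omega
    refine ⟨hub a v, fun h => hub_ne a v (Fin.ext (h.trans hv.symm)), ?_⟩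
    simp only [hhub, Sym2.eq_swap]
  · exact ⟨v, hv, rfl⟩

theorem ncard_edgeSet (a : Fin d) : (GammaE d a).edgeSet.ncard = 2 * d - 1 := by
  have hcompl : {v : Fin (2 * d) | (v : ℕ) ≠ 2 * a} = {⟨2 * a, by omega⟩}ᶜ := by
    ext v
    simp only [Set.mem_ofPred_eq, Set.mem_compl_iff, Set.mem_singleton_iff, Fin.ext_iff, ne_eq]
  rw [edgeSet_eq_range_hub, range_sym2Mk_hub, (injOn_sym2Mk_hub a).ncard_image, hcompl,
    Set.ncard_compl, Set.ncard_singleton, Nat.card_fin]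

theorem ncard_ind_fiber (a : Fin d) : (ind ⁻¹' {a}).ncard = 2 * d - 1 := by
  rw [← ncard_edgeSet a, ncard_edgeSet_eq_ncard_lt_pairs]
  exact congrArg Set.ncard (Set.ext fun e => (adj_iff_of_lt e.2).symm)

end GammaE

theorem IsEdgePartition.exists_colouring {Γ : Fin d → SimpleGraph (Fin (2 * d))}
    (hΓ : IsEdgePartition Γ) :
    ∃ c : EdgePair d → Fin d, ∀ a e, (Γ a).Adj e.1.1 e.1.2 ↔ c e = a := by
  obtain ⟨hdisj, hunion⟩ := hΓ
  have hcover (e : EdgePair d) : ∃ a, (Γ a).Adj e.1.1 e.1.2 := by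
    have he : s(e.1.1, e.1.2) ∈ ⋃ a, (Γ a).edgeSet := hunion ▸ e.2.ne
    simpa only [Set.mem_iUnion, SimpleGraph.mem_edgeSet] using he
  choose c hc using hcover
  refine ⟨c, fun a e => ⟨fun ha => ?_, fun h => h ▸ hc e⟩⟩
  by_contra hne
  exact Set.disjoint_left.1 (hdisj _ _ hne) ((Γ (c e)).mem_edgeSet.2 (hc e)) ha

variable {k : Type*} [Field k] {A : Fin d → EdgePair d → k}
  {Γ : Fin d → SimpleGraph (Fin (2 * d))}

theorem S2UpperTriangular.le_ind_of_MGamma_ne_zero (hA : S2UpperTriangular A)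
    (hM : MGamma Γ A ≠ 0) {a : Fin d} {e : EdgePair d} (he : (Γ a).Adj e.1.1 e.1.2) :
    a ≤ ind e := by
  contrapose! hM
  refine Finset.prod_eq_zero (Finset.mem_univ a) (Finset.prod_eq_zero (Finset.mem_univ e) ?_)
  rw [if_pos he, hA a e hM]

theorem upper_monomial_eq_zero_of_ne_GammaE_general (hA : S2UpperTriangular A)
    (hΓ : IsEdgePartition Γ) (hhom : ∀ a b, (Γ a).edgeSet.ncard = (Γ b).edgeSet.ncard) :
    Γ = GammaE d ∨ MGamma Γ A = 0 := by
  refine or_iff_not_imp_right.2 fun hM => ?_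
  obtain ⟨c, hc⟩ := hΓ.exists_colouring
  have hle : c ≤ ind := fun e => hA.le_ind_of_MGamma_ne_zero hM ((hc _ e).2 rfl)
  have hfiber (a : Fin d) : (c ⁻¹' {a}).ncard = (Γ a).edgeSet.ncard := by
    rw [ncard_edgeSet_eq_ncard_lt_pairs]
    exact congrArg Set.ncard (Set.ext fun e => (hc a e).symm)
  have hcind : c = ind := by
    refine eq_of_le_of_ncard_fiber_const hle (fun a b => ?_) fun a b => ?_
    · rw [hfiber, hfiber, hhom a b]
    · rw [GammaE.ncard_ind_fiber, GammaE.ncard_ind_fiber]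
  refine funext fun a => simpleGraph_ext_of_lt fun i j hij => ?_
  rw [GammaE.adj_iff_of_lt hij, hc a ⟨(i, j), hij⟩, hcind, ind]

end EdgePartition

/-- For an S²-upper triangular matrix A and a homogeneous cycle-free edge
d-partition Γ of K_{2d}, either Γ = Γ^E or M_Γ(A) = 0. -/
theorem upper_monomial_eq_zero_of_ne_GammaE (k : Type*) [Field k] (d : ℕ) (hd : 1 ≤ d)
    (A : Fin d → EdgePair d → k) (hA : S2UpperTriangular A)
    (Γ : Fin d → SimpleGraph (Fin (2*d))) (hΓ : IsHCFPartition Γ) :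
    Γ = (fun a : Fin d => GammaE d a) ∨ MGamma Γ A = 0 :=
  upper_monomial_eq_zero_of_ne_GammaE_general hA hΓ.1 hΓ.2.1
end

section
/- If A and B are S^2-upper triangular d×d(2d-1) matrices over k, then A⊙B is S^2-upper triangular; thus the set U^{S^2}_d of S^2-upper triangular d×d(2d-1) matrices is closed under the Leg Identifying Multiplication. -/
def mkEdge {d : ℕ} (i j : ℕ) (hi : i < 2*d) (hj : j < 2*d) (hij : i < j) : EdgePair d :=
  ⟨(⟨i, hi⟩, ⟨j, hj⟩), Fin.mk_lt_mk.mpr hij⟩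

/-- The central edge `(2a-1, 2a)` of the twin star `TS_d(2a-1, 2a)` (0-based `a`). -/
def centerEdge {d : ℕ} (a : Fin d) : EdgePair d :=
  mkEdge (2*a) (2*a+1) (by have := a.isLt; omega) (by have := a.isLt; omega) (by omega)

/-- The left leg of the twin star `TS_d(2a-1, 2a)` with leg number `n + 1`
(both `a` and `n` 0-based): left legs are enumerated in increasing order of their
endpoint different from `2a - 1`. -/
def leftLeg {d : ℕ} (a : Fin d) (n : Fin (d-1)) : EdgePair d :=
  if h : (n : ℕ) < (a : ℕ) then
    mkEdge (2*n+1) (2*a) (by have := n.isLt; omega) (by have := a.isLt; omega) (by omega)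
  else
    mkEdge (2*a) (2*n+2) (by have := a.isLt; omega) (by have := n.isLt; omega) (by omega)

/-- The right leg of the twin star `TS_d(2a-1, 2a)` with leg number `n + 1`
(both `a` and `n` 0-based): right legs are enumerated in increasing order of their
endpoint different from `2a`. -/
def rightLeg {d : ℕ} (a : Fin d) (n : Fin (d-1)) : EdgePair d :=
  if h : (n : ℕ) < (a : ℕ) then
    mkEdge (2*n) (2*a+1) (by have := n.isLt; omega) (by have := a.isLt; omega) (by omega)
  else
    mkEdge (2*a+1) (2*n+3) (by have := a.isLt; omega) (by have := n.isLt; omega) (by omega)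

/-- The central leg submatrix `A^C`: its `a`-th column is the column of `A` indexed by
`(2a-1, 2a)`. -/
def legC {d : ℕ} {k : Type*} [Field k] (A : Fin d → EdgePair d → k) :
    Matrix (Fin d) (Fin d) k :=
  Matrix.of fun r a => A r (centerEdge a)

/-- The left leg submatrix `A^L_n`: its `a`-th column is the column of `A` indexed by the
left leg of `TS_d(2a-1, 2a)` with leg number `n`. -/
def legL {d : ℕ} {k : Type*} [Field k] (A : Fin d → EdgePair d → k) (n : Fin (d-1)) :
    Matrix (Fin d) (Fin d) k :=
  Matrix.of fun r a => A r (leftLeg a n)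

/-- The right leg submatrix `A^R_n`: its `a`-th column is the column of `A` indexed by the
right leg of `TS_d(2a-1, 2a)` with leg number `n`. -/
def legR {d : ℕ} {k : Type*} [Field k] (A : Fin d → EdgePair d → k) (n : Fin (d-1)) :
    Matrix (Fin d) (Fin d) k :=
  Matrix.of fun r a => A r (rightLeg a n)

/-- The Leg Identifying Multiplication `A ⊙ B`: each column, indexed by an edge `e` of
`K_{2d}`, is classified as the central edge, a left leg, or a right leg (with its leg
number `n`) of the twin star it belongs to, say `TS_d(2a-1,2a)`; the corresponding column
of `A ⊙ B` is the `a`-th column of the ordinary matrix product of the corresponding leg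
submatrices of `A` and `B`. -/
def LIM {d : ℕ} {k : Type*} [Field k] (A B : Fin d → EdgePair d → k) :
    Fin d → EdgePair d → k := fun r e =>
  have hij : (e.val.1 : ℕ) < (e.val.2 : ℕ) := e.prop
  have hi : (e.val.1 : ℕ) < 2*d := e.val.1.isLt
  have hj : (e.val.2 : ℕ) < 2*d := e.val.2.isLt
  if h1 : (e.val.1 : ℕ) % 2 = 0 then
    if h2 : (e.val.2 : ℕ) % 2 = 1 then
      if h3 : (e.val.2 : ℕ) = (e.val.1 : ℕ) + 1 then
        -- the central edge (2a-1, 2a) with (0-based) a = i/2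
        (legC A * legC B) r ⟨(e.val.1 : ℕ) / 2, by omega⟩
      else
        -- a right leg (2a'-1, 2a) : star (0-based) a = j/2, leg number (0-based) i/2
        (legR A ⟨(e.val.1 : ℕ) / 2, by omega⟩ * legR B ⟨(e.val.1 : ℕ) / 2, by omega⟩)
          r ⟨(e.val.2 : ℕ) / 2, by omega⟩
    else
      -- a left leg (2a-1, 2c-1) : star (0-based) a = i/2, leg number (0-based) j/2 - 1
      (legL A ⟨(e.val.2 : ℕ) / 2 - 1, by omega⟩ * legL B ⟨(e.val.2 : ℕ) / 2 - 1, by omega⟩)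
        r ⟨(e.val.1 : ℕ) / 2, by omega⟩
  else
    if h2 : (e.val.2 : ℕ) % 2 = 0 then
      -- a left leg (2a', 2a-1) : star (0-based) a = j/2, leg number (0-based) i/2
      (legL A ⟨(e.val.1 : ℕ) / 2, by omega⟩ * legL B ⟨(e.val.1 : ℕ) / 2, by omega⟩)
        r ⟨(e.val.2 : ℕ) / 2, by omega⟩
    else
      -- a right leg (2a, 2c) : star (0-based) a = i/2, leg number (0-based) j/2 - 1
      (legR A ⟨(e.val.2 : ℕ) / 2 - 1, by omega⟩ * legR B ⟨(e.val.2 : ℕ) / 2 - 1, by omega⟩)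
        r ⟨(e.val.1 : ℕ) / 2, by omega⟩

/-!
The leg submatrices together contain every column of a matrix, and `A ⊙ B` multiplies them one by
one: `(A ⊙ B)^C = A^C B^C`, `(A ⊙ B)^L_n = A^L_n B^L_n` and `(A ⊙ B)^R_n = A^R_n B^R_n`. Since every
edge of the twin star `TS_d(2a-1, 2a)` has `ind = a`, a matrix is `S²`-upper triangular exactly when
all of its leg submatrices are upper triangular, a property that products inherit.
-/

section TwinStars

variable {d : ℕ}

theorem ind_centerEdge (a : Fin d) : ind (centerEdge a) = a := by
  grind [ind, indF, centerEdge, mkEdge]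

theorem ind_leftLeg (a : Fin d) (n : Fin (d - 1)) : ind (leftLeg a n) = a := by
  grind [ind, indF, leftLeg, mkEdge]

theorem ind_rightLeg (a : Fin d) (n : Fin (d - 1)) : ind (rightLeg a n) = a := by
  grind [ind, indF, rightLeg, mkEdge]

theorem eq_centerEdge_or_eq_leftLeg_or_eq_rightLeg (e : EdgePair d) :
    (∃ a, e = centerEdge a) ∨ (∃ a n, e = leftLeg a n) ∨ ∃ a n, e = rightLeg a n := by
  obtain ⟨⟨⟨i, hi⟩, ⟨j, hj⟩⟩, hij⟩ := e
  rw [Fin.mk_lt_mk] at hij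
  obtain ⟨a, rfl | rfl⟩ := i.even_or_odd' <;> obtain ⟨b, rfl | rfl⟩ := j.even_or_odd'
  · refine .inr (.inl ⟨⟨a, by omega⟩, ⟨b - 1, by omega⟩, ?_⟩)
    grind [leftLeg, mkEdge]
  · obtain rfl | hab := eq_or_ne a b
    · exact .inl ⟨⟨a, by omega⟩, rfl⟩
    · refine .inr (.inr ⟨⟨b, by omega⟩, ⟨a, by omega⟩, ?_⟩)
      grind [rightLeg, mkEdge]
  · refine .inr (.inl ⟨⟨b, by omega⟩, ⟨a, by omega⟩, ?_⟩)
    grind [leftLeg, mkEdge]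
  · refine .inr (.inr ⟨⟨a, by omega⟩, ⟨b - 1, by omega⟩, ?_⟩)
    grind [rightLeg, mkEdge]

end TwinStars

section LegIdentifyingMultiplication

variable {d : ℕ} {k : Type*} [Field k]

theorem s2UpperTriangular_iff_isUpperTriangular_legs {A : Fin d → EdgePair d → k} :
    S2UpperTriangular A ↔ (legC A).IsUpperTriangular ∧
      (∀ n, (legL A n).IsUpperTriangular) ∧ ∀ n, (legR A n).IsUpperTriangular := by
  constructor
  · intro hA
    exact ⟨fun r a h => hA r (centerEdge a) (by rwa [ind_centerEdge]),
      fun n r a h => hA r (leftLeg a n) (by rwa [ind_leftLeg]),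
      fun n r a h => hA r (rightLeg a n) (by rwa [ind_rightLeg])⟩
  · rintro ⟨hC, hL, hR⟩ r e h
    obtain ⟨a, rfl⟩ | ⟨a, n, rfl⟩ | ⟨a, n, rfl⟩ := eq_centerEdge_or_eq_leftLeg_or_eq_rightLeg e
    · exact hC (by rwa [ind_centerEdge] at h)
    · exact hL n (by rwa [ind_leftLeg] at h)
    · exact hR n (by rwa [ind_rightLeg] at h)

variable (A B : Fin d → EdgePair d → k)

theorem legC_LIM : legC (LIM A B) = legC A * legC B := by
  ext r a
  simp [legC, LIM, centerEdge, mkEdge]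

theorem legL_LIM (n : Fin (d - 1)) : legL (LIM A B) n = legL A n * legL B n := by
  ext r a
  change LIM A B r (leftLeg a n) = _
  rw [leftLeg]
  split_ifs with hna
  · have hn : (2 * (n : ℕ) + 1) / 2 = n := by omega
    simp [LIM, mkEdge, hn]
  · simp [LIM, mkEdge]

theorem legR_LIM (n : Fin (d - 1)) : legR (LIM A B) n = legR A n * legR B n := by
  ext r a
  have ha : (2 * (a : ℕ) + 1) / 2 = a := by omega
  change LIM A B r (rightLeg a n) = _
  rw [rightLeg]
  split_ifs with hna
  · simp [LIM, mkEdge, ha, hna.ne']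
  · have hn : (2 * (n : ℕ) + 3) / 2 - 1 = n := by omega
    simp [LIM, mkEdge, ha, hn]

end LegIdentifyingMultiplication

/-- The set of S²-upper triangular matrices is closed under the Leg Identifying
Multiplication. -/
theorem LIM_upper_triangular (k : Type*) [Field k] (d : ℕ) (hd : 1 ≤ d)
    (A B : Fin d → EdgePair d → k)
    (hA : S2UpperTriangular A) (hB : S2UpperTriangular B) :
    S2UpperTriangular (LIM A B) := by
  rw [s2UpperTriangular_iff_isUpperTriangular_legs] at hA hB ⊢
  obtain ⟨hAC, hAL, hAR⟩ := hA
  obtain ⟨hBC, hBL, hBR⟩ := hB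
  simp only [legC_LIM, legL_LIM, legR_LIM]
  exact ⟨hAC.mul hBC, fun n => (hAL n).mul (hBL n), fun n => (hAR n).mul (hBR n)⟩
end
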